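/- arXiv:2403.13584 — 2 statements merged into one kernel-verified Lean document; each statement's English description precedes it below -/
import Mathlib

section
/- Let ρ and σ be density operators on a finite-dimensional complex Hilbert space with supp(ρ) ⊆ supp(σ). Then for every test 0 ≤ T ≤ 𝟙 with Tr[ρT] > 0 and every α > 1, one has Tr[ρT] ≤ exp( −((α−1)/α) ( −log Tr[σT] − D_α^*(ρ‖σ) ) ), and consequently Tr[ρT] ≤ exp( −sup_{α>1} ((α−1)/α)( −log Tr[σT] − D_α^*(ρ‖σ) ) ). -/
open Matrix
open scoped ComplexOrder Kronecker

noncomputable section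

/-- Real power of a Hermitian matrix via functional calculus on its support
(Moore–Penrose convention); junk value `0` for non-Hermitian input. -/
def Matrix.rpowH {ι : Type*} [Fintype ι] [DecidableEq ι] (A : Matrix ι ι ℂ) (p : ℝ) :
    Matrix ι ι ℂ :=
  if hA : A.IsHermitian then
    (hA.eigenvectorUnitary : Matrix ι ι ℂ) *
      Matrix.diagonal (fun i => ((hA.eigenvalues i ^ p : ℝ) : ℂ)) *
      star (hA.eigenvectorUnitary : Matrix ι ι ℂ)
  else 0

/-- Real part of the trace. -/
def retr {ι : Type*} [Fintype ι] (A : Matrix ι ι ℂ) : ℝ :=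
  (Matrix.trace A).re

/-- Sandwiched Rényi divergence
`D_α^*(ρ‖σ) = (α-1)⁻¹ log Tr[(σ^{(1-α)/(2α)} ρ σ^{(1-α)/(2α)})^α]`. -/
def sandwichedRenyiDiv {ι : Type*} [Fintype ι] [DecidableEq ι]
    (α : ℝ) (ρ σ : Matrix ι ι ℂ) : ℝ :=
  (α - 1)⁻¹ * Real.log (retr (Matrix.rpowH
    (Matrix.rpowH σ ((1 - α) / (2 * α)) * ρ * Matrix.rpowH σ ((1 - α) / (2 * α))) α))

/-!
With `γ = (1 - α) / (2α)` and `β = α / (α - 1)` the exponent conjugate to `α`, the support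
condition gives `Tr[ρT] = Tr[(σ^γ ρ σ^γ) (σ^{-γ} T σ^{-γ})]`. Hölder's inequality for the trace
bounds this by `Q^{1/α} · Tr[(σ^{-γ} T σ^{-γ})^β]^{1/β}`, where `log Q = (α - 1) D_α^*(ρ‖σ)`. The
second trace equals `Tr[(√T σ^{1/β} √T)^β]`, which is at most `Tr[√T σ √T] = Tr[σT]` by Jensen's
trace inequality for the contraction `√T`. Both inequalities reduce to
`⟨v, Av⟩^p ≤ ⟨v, A^p v⟩` for `A ≥ 0`, `p ≥ 1` and `‖v‖ ≤ 1`, which is Jensen's inequality for the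
spectral measure of `A` at `v`.
-/

section RealInequalities

lemma rpow_sum_mul_le_sum_mul_rpow {κ : Type*} (s : Finset κ) {p : ℝ} (hp : 1 ≤ p) {w f : κ → ℝ}
    (hw : ∀ i, 0 ≤ w i) (hw1 : ∑ i ∈ s, w i ≤ 1) (hf : ∀ i, 0 ≤ f i) :
    (∑ i ∈ s, w i * f i) ^ p ≤ ∑ i ∈ s, w i * f i ^ p := by
  have hp0 : 0 < p := by positivity
  have hmean : 0 ≤ ∑ i ∈ s, w i * f i := Finset.sum_nonneg fun i _ ↦ mul_nonneg (hw i) (hf i)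
  have hmoment : 0 ≤ ∑ i ∈ s, w i * f i ^ p :=
    Finset.sum_nonneg fun i _ ↦ mul_nonneg (hw i) (Real.rpow_nonneg (hf i) p)
  have hweight : (∑ i ∈ s, w i) ^ (1 - p⁻¹) ≤ 1 :=
    Real.rpow_le_one (Finset.sum_nonneg fun i _ ↦ hw i) hw1
      (sub_nonneg.2 (inv_le_one_of_one_le₀ hp))
  rw [← Real.le_rpow_inv_iff_of_pos hmean hmoment hp0]
  calc ∑ i ∈ s, w i * f i
      ≤ (∑ i ∈ s, w i) ^ (1 - p⁻¹) * (∑ i ∈ s, w i * f i ^ p) ^ p⁻¹ :=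
        Real.inner_le_weight_mul_Lp_of_nonneg s hp w f hw hf
    _ ≤ (∑ i ∈ s, w i * f i ^ p) ^ p⁻¹ :=
        mul_le_of_le_one_left (Real.rpow_nonneg hmoment _) hweight

lemma le_exp_of_le_rpow_mul_rpow {α t Q s : ℝ} (hα : 1 < α) (ht : 0 < t) (hQ : 0 ≤ Q) (hs : 0 ≤ s)
    (h : t ≤ Q ^ (1 / α) * s ^ ((α - 1) / α)) :
    t ≤ Real.exp (-((α - 1) / α * (-Real.log s - (α - 1)⁻¹ * Real.log Q))) := by
  have hα1 : 0 < α - 1 := sub_pos.2 hα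
  have hprod : 0 < Q ^ (1 / α) * s ^ ((α - 1) / α) := ht.trans_le h
  have hQ' : 0 < Q := hQ.lt_of_ne' fun hQ0 ↦ by
    rw [hQ0, Real.zero_rpow (by positivity), zero_mul] at hprod
    exact hprod.false
  have hs' : 0 < s := hs.lt_of_ne' fun hs0 ↦ by
    rw [hs0, Real.zero_rpow (by positivity), mul_zero] at hprod
    exact hprod.false
  refine h.trans_eq ?_
  rw [Real.rpow_def_of_pos hQ', Real.rpow_def_of_pos hs', ← Real.exp_add]
  congr 1
  field_simp
  ring

/-- Where `P` fails the inner supremum is over the empty set and takes the junk value `0`. -/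
lemma le_exp_neg_iSup {κ : Type*} {P : κ → Prop} {t : ℝ} {f : κ → ℝ} (ht : 0 < t) (ht1 : t ≤ 1)
    (h : ∀ i, P i → t ≤ Real.exp (-f i)) : t ≤ Real.exp (-⨆ (i : κ) (_ : P i), f i) := by
  have hlog : 0 ≤ -Real.log t := neg_nonneg.2 (Real.log_nonpos ht.le ht1)
  rw [← Real.log_le_iff_le_exp ht, le_neg]
  exact Real.iSup_le (fun i ↦ Real.iSup_le
    (fun hi ↦ le_neg.1 ((Real.log_le_iff_le_exp ht).2 (h i hi))) hlog) hlog

end RealInequalities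

section TraceAndPowers

variable {ι : Type*} [Fintype ι]

lemma retr_mul_comm (A B : Matrix ι ι ℂ) : retr (A * B) = retr (B * A) := by
  rw [retr, retr, Matrix.trace_mul_comm]

section RealPowers

variable [DecidableEq ι] {A : Matrix ι ι ℂ}

lemma rpowH_eq_cfc (hA : A.IsHermitian) (p : ℝ) : A.rpowH p = cfc (fun x : ℝ ↦ x ^ p) A := by
  rw [hA.cfc_eq, Matrix.rpowH, dif_pos hA]
  rfl

lemma continuousOn_spectrum_real (f : ℝ → ℝ) : ContinuousOn f (spectrum ℝ A) :=
  A.finite_real_spectrum.continuousOn f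

lemma spectrum_nonneg_of_posSemidef (hA : A.PosSemidef) {x : ℝ} (hx : x ∈ spectrum ℝ A) :
    0 ≤ x := by
  rw [hA.isHermitian.spectrum_real_eq_range_eigenvalues] at hx
  obtain ⟨i, rfl⟩ := hx
  exact hA.eigenvalues_nonneg i

lemma isHermitian_rpowH (hA : A.IsHermitian) (p : ℝ) : (A.rpowH p).IsHermitian := by
  rw [rpowH_eq_cfc hA]
  exact cfc_predicate _ A

lemma rpowH_one (hA : A.IsHermitian) : A.rpowH 1 = A := by
  simp only [rpowH_eq_cfc hA, Real.rpow_one]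
  exact cfc_id' ℝ A hA

lemma rpowH_mul_rpowH (hA : A.PosSemidef) {p q : ℝ} (hpq : p + q ≠ 0) :
    A.rpowH p * A.rpowH q = A.rpowH (p + q) := by
  simp only [rpowH_eq_cfc hA.isHermitian]
  rw [← cfc_mul _ _ A (continuousOn_spectrum_real _) (continuousOn_spectrum_real _)]
  exact cfc_congr fun x hx ↦ (Real.rpow_add' (spectrum_nonneg_of_posSemidef hA hx) hpq).symm

lemma rpowH_rpowH (hA : A.PosSemidef) (p q : ℝ) : (A.rpowH p).rpowH q = A.rpowH (p * q) := by
  rw [rpowH_eq_cfc (isHermitian_rpowH hA.isHermitian p), rpowH_eq_cfc hA.isHermitian,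
    rpowH_eq_cfc hA.isHermitian]
  calc cfc (fun x : ℝ ↦ x ^ q) (cfc (fun x : ℝ ↦ x ^ p) A)
      = cfc (fun x : ℝ ↦ (x ^ p) ^ q) A :=
        (cfc_comp' (fun x : ℝ ↦ x ^ q) (fun x : ℝ ↦ x ^ p) A
          ((A.finite_real_spectrum.image _).continuousOn _) (continuousOn_spectrum_real _)
          hA.isHermitian).symm
    _ = cfc (fun x : ℝ ↦ x ^ (p * q)) A :=
        cfc_congr fun x hx ↦ (Real.rpow_mul (spectrum_nonneg_of_posSemidef hA hx) p q).symm

lemma mul_rpowH_mul_rpowH_neg (hA : A.PosSemidef) (p : ℝ) :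
    A * (A.rpowH p * A.rpowH (-p)) = A := by
  have hcancel {x : ℝ} (hx : 0 ≤ x) : x ^ (1 : ℝ) * (x ^ p * x ^ (-p)) = x ^ (1 : ℝ) := by
    obtain rfl | hx := hx.eq_or_lt
    · simp
    · rw [← Real.rpow_add hx, add_neg_cancel, Real.rpow_zero, mul_one]
  nth_rw 1 4 [← rpowH_one hA.isHermitian]
  simp only [rpowH_eq_cfc hA.isHermitian]
  rw [← cfc_mul _ _ A (continuousOn_spectrum_real _) (continuousOn_spectrum_real _),
    ← cfc_mul _ _ A (continuousOn_spectrum_real _) (continuousOn_spectrum_real _)]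
  exact cfc_congr fun x hx ↦ hcancel (spectrum_nonneg_of_posSemidef hA hx)

end RealPowers

section QuadraticForm

variable [DecidableEq ι] {A : Matrix ι ι ℂ}

/-- The quadratic form `Re ⟨v, A v⟩` of a complex matrix, which is `⟨v, A v⟩` itself when `A` is
Hermitian. -/
def quadForm (A : Matrix ι ι ℂ) (v : EuclideanSpace ℂ ι) : ℝ :=
  (inner ℂ v (Matrix.toEuclideanCLM (𝕜 := ℂ) A v)).re

lemma quadForm_sub (A B : Matrix ι ι ℂ) (v : EuclideanSpace ℂ ι) :
    quadForm (A - B) v = quadForm A v - quadForm B v := by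
  simp only [quadForm, map_sub, _root_.sub_apply, inner_sub_right, Complex.sub_re]

lemma quadForm_one (v : EuclideanSpace ℂ ι) : quadForm 1 v = ‖v‖ ^ 2 := by
  rw [quadForm, map_one, one_apply_eq_self]
  exact inner_self_eq_norm_sq (𝕜 := ℂ) v

lemma quadForm_conjTranspose_mul_mul (A K : Matrix ι ι ℂ) (v : EuclideanSpace ℂ ι) :
    quadForm (Kᴴ * A * K) v = quadForm A (Matrix.toEuclideanCLM (𝕜 := ℂ) K v) := by
  rw [quadForm, quadForm, ← Matrix.star_eq_conjTranspose, map_mul, map_mul, map_star,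
    ContinuousLinearMap.star_eq_adjoint, mul_apply_eq_comp,
    mul_apply_eq_comp, ContinuousLinearMap.adjoint_inner_right]

lemma quadForm_nonneg (hA : A.PosSemidef) (v : EuclideanSpace ℂ ι) : 0 ≤ quadForm A v := by
  have h := hA.dotProduct_mulVec_nonneg v.ofLp
  rw [quadForm, EuclideanSpace.inner_eq_star_dotProduct, dotProduct_comm]
  exact (Complex.le_def.1 h).1

lemma norm_toEuclideanCLM_le_of_contraction {K : Matrix ι ι ℂ} (hK : (1 - Kᴴ * K).PosSemidef)
    (v : EuclideanSpace ℂ ι) : ‖Matrix.toEuclideanCLM (𝕜 := ℂ) K v‖ ≤ ‖v‖ := by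
  have h := quadForm_nonneg hK v
  rw [quadForm_sub, quadForm_one, ← Matrix.mul_one Kᴴ, quadForm_conjTranspose_mul_mul,
    quadForm_one, sub_nonneg] at h
  exact (sq_le_sq₀ (norm_nonneg _) (norm_nonneg _)).1 h

lemma retr_eq_sum_quadForm (A : Matrix ι ι ℂ)
    (b : OrthonormalBasis ι ℂ (EuclideanSpace ℂ ι)) : retr A = ∑ i, quadForm A (b i) := by
  have htrace : (Matrix.toEuclideanLin A).trace ℂ _ = A.trace :=
    Matrix.trace_toLin_eq A (PiLp.basisFun 2 ℂ ι)
  rw [retr, ← htrace, LinearMap.trace_eq_sum_inner _ b, Complex.re_sum]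
  rfl

end QuadraticForm

section SpectralDecomposition

variable [DecidableEq ι] {A B : Matrix ι ι ℂ}

lemma toEuclideanCLM_rpowH_eigenvectorBasis (hA : A.IsHermitian) (p : ℝ) (i : ι) :
    Matrix.toEuclideanCLM (𝕜 := ℂ) (A.rpowH p) (hA.eigenvectorBasis i) =
      ((hA.eigenvalues i ^ p : ℝ) : ℂ) • hA.eigenvectorBasis i := by
  apply WithLp.ofLp_injective
  rw [Matrix.ofLp_toEuclideanCLM, Matrix.rpowH, dif_pos hA, ← Matrix.mulVec_mulVec,
    ← Matrix.mulVec_mulVec, hA.star_eigenvectorUnitary_mulVec, Matrix.diagonal_mulVec_single,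
    ← smul_eq_mul, Pi.single_smul, Matrix.mulVec_smul,
    hA.eigenvectorUnitary_mulVec, WithLp.ofLp_smul]

lemma toEuclideanCLM_eigenvectorBasis (hA : A.IsHermitian) (i : ι) :
    Matrix.toEuclideanCLM (𝕜 := ℂ) A (hA.eigenvectorBasis i) =
      (hA.eigenvalues i : ℂ) • hA.eigenvectorBasis i := by
  simpa only [rpowH_one hA, Real.rpow_one] using toEuclideanCLM_rpowH_eigenvectorBasis hA 1 i

lemma retr_mul_eq_sum_eigenvalues_mul_quadForm (hA : A.IsHermitian) (B : Matrix ι ι ℂ) :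
    retr (A * B) = ∑ i, hA.eigenvalues i * quadForm B (hA.eigenvectorBasis i) := by
  rw [retr_mul_comm, retr_eq_sum_quadForm _ hA.eigenvectorBasis]
  refine Finset.sum_congr rfl fun i _ ↦ ?_
  rw [quadForm, map_mul, mul_apply_eq_comp, toEuclideanCLM_eigenvectorBasis, map_smul,
    inner_smul_right, Complex.re_ofReal_mul, quadForm]

lemma quadForm_rpowH (hA : A.IsHermitian) (p : ℝ) (v : EuclideanSpace ℂ ι) :
    quadForm (A.rpowH p) v =
      ∑ i, ‖inner ℂ (hA.eigenvectorBasis i) v‖ ^ 2 * hA.eigenvalues i ^ p := by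
  have hsymm (u w : EuclideanSpace ℂ ι) :
      inner ℂ u (Matrix.toEuclideanCLM (𝕜 := ℂ) (A.rpowH p) w) =
        inner ℂ (Matrix.toEuclideanCLM (𝕜 := ℂ) (A.rpowH p) u) w := by
    rw [← ContinuousLinearMap.adjoint_inner_left, ← ContinuousLinearMap.star_eq_adjoint,
      ← map_star, (isHermitian_rpowH hA p).isSelfAdjoint.star_eq]
  rw [quadForm, ← hA.eigenvectorBasis.sum_inner_mul_inner, Complex.re_sum]
  refine Finset.sum_congr rfl fun i _ ↦ ?_
  rw [hsymm, toEuclideanCLM_rpowH_eigenvectorBasis, inner_smul_left, Complex.conj_ofReal,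
    mul_left_comm, Complex.re_ofReal_mul, ← inner_conj_symm, Complex.conj_mul', mul_comm]
  norm_cast

lemma quadForm_rpowH_eigenvectorBasis (hA : A.IsHermitian) (p : ℝ) (i : ι) :
    quadForm (A.rpowH p) (hA.eigenvectorBasis i) = hA.eigenvalues i ^ p := by
  rw [quadForm, toEuclideanCLM_rpowH_eigenvectorBasis, inner_smul_right, Complex.re_ofReal_mul,
    inner_self_eq_norm_sq_to_K, hA.eigenvectorBasis.norm_eq_one]
  simp

lemma quadForm_eigenvectorBasis (hA : A.IsHermitian) (i : ι) :
    quadForm A (hA.eigenvectorBasis i) = hA.eigenvalues i := by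
  simpa only [rpowH_one hA, Real.rpow_one] using quadForm_rpowH_eigenvectorBasis hA 1 i

lemma retr_rpowH (hA : A.IsHermitian) (p : ℝ) : retr (A.rpowH p) = ∑ i, hA.eigenvalues i ^ p := by
  rw [retr_eq_sum_quadForm _ hA.eigenvectorBasis]
  exact Finset.sum_congr rfl fun i _ ↦ quadForm_rpowH_eigenvectorBasis hA p i

lemma retr_rpowH_mul_comm (hAB : (A * B).IsHermitian) (hBA : (B * A).IsHermitian) (p : ℝ) :
    retr ((A * B).rpowH p) = retr ((B * A).rpowH p) := by
  rw [retr_rpowH hAB, retr_rpowH hBA,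
    (hAB.eigenvalues_eq_eigenvalues_iff hBA).2 (Matrix.charpoly_mul_comm A B)]

end SpectralDecomposition

section TraceInequalities

variable {A B : Matrix ι ι ℂ}

lemma retr_mul_nonneg (hA : A.PosSemidef) (hB : B.PosSemidef) : 0 ≤ retr (A * B) := by
  classical
  rw [retr_mul_eq_sum_eigenvalues_mul_quadForm hA.isHermitian]
  exact Finset.sum_nonneg fun i _ ↦ mul_nonneg (hA.eigenvalues_nonneg i) (quadForm_nonneg hB _)

variable [DecidableEq ι]

lemma retr_mul_le_retr (hA : A.PosSemidef) (hB : (1 - B).PosSemidef) :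
    retr (A * B) ≤ retr A := by
  have h := retr_mul_nonneg hA hB
  rwa [Matrix.mul_sub, Matrix.mul_one, retr, Matrix.trace_sub, Complex.sub_re, sub_nonneg] at h

lemma retr_rpowH_nonneg (hA : A.PosSemidef) (p : ℝ) : 0 ≤ retr (A.rpowH p) := by
  rw [retr_rpowH hA.isHermitian]
  exact Finset.sum_nonneg fun i _ ↦ Real.rpow_nonneg (hA.eigenvalues_nonneg i) p

lemma quadForm_rpow_le_quadForm_rpowH (hA : A.PosSemidef) {p : ℝ} (hp : 1 ≤ p)
    {v : EuclideanSpace ℂ ι} (hv : ‖v‖ ≤ 1) : quadForm A v ^ p ≤ quadForm (A.rpowH p) v := by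
  have hweights : ∑ i, ‖inner ℂ (hA.isHermitian.eigenvectorBasis i) v‖ ^ 2 ≤ 1 := by
    rw [OrthonormalBasis.sum_sq_norm_inner_right]
    exact pow_le_one₀ (norm_nonneg v) hv
  have hmean := quadForm_rpowH hA.isHermitian 1 v
  simp only [rpowH_one hA.isHermitian, Real.rpow_one] at hmean
  rw [hmean, quadForm_rpowH hA.isHermitian]
  exact rpow_sum_mul_le_sum_mul_rpow _ hp (fun _ ↦ sq_nonneg _) hweights hA.eigenvalues_nonneg

lemma retr_rpowH_conj_le_of_contraction (hA : A.PosSemidef) {K : Matrix ι ι ℂ}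
    (hK : (1 - Kᴴ * K).PosSemidef) {p : ℝ} (hp : 1 ≤ p) :
    retr ((Kᴴ * A * K).rpowH p) ≤ retr (Kᴴ * A.rpowH p * K) := by
  have hherm : (Kᴴ * A * K).IsHermitian := (hA.conjTranspose_mul_mul_same K).isHermitian
  rw [retr_rpowH hherm, retr_eq_sum_quadForm _ hherm.eigenvectorBasis]
  refine Finset.sum_le_sum fun i _ ↦ ?_
  rw [← quadForm_eigenvectorBasis hherm, quadForm_conjTranspose_mul_mul,
    quadForm_conjTranspose_mul_mul]
  exact quadForm_rpow_le_quadForm_rpowH hA hp <|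
    (norm_toEuclideanCLM_le_of_contraction hK _).trans_eq (hherm.eigenvectorBasis.norm_eq_one i)

lemma retr_mul_le_rpow_mul_rpow (hA : A.PosSemidef) (hB : B.PosSemidef) {p q : ℝ}
    (hpq : p.HolderConjugate q) :
    retr (A * B) ≤ retr (A.rpowH p) ^ (1 / p) * retr (B.rpowH q) ^ (1 / q) := by
  have hdiag : ∑ i, quadForm B (hA.isHermitian.eigenvectorBasis i) ^ q ≤ retr (B.rpowH q) := by
    rw [retr_eq_sum_quadForm _ hA.isHermitian.eigenvectorBasis]
    exact Finset.sum_le_sum fun i _ ↦ quadForm_rpow_le_quadForm_rpowH hB hpq.symm.lt.le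
      (hA.isHermitian.eigenvectorBasis.norm_eq_one i).le
  rw [retr_mul_eq_sum_eigenvalues_mul_quadForm hA.isHermitian]
  calc ∑ i, hA.isHermitian.eigenvalues i * quadForm B (hA.isHermitian.eigenvectorBasis i)
      ≤ (∑ i, hA.isHermitian.eigenvalues i ^ p) ^ (1 / p) *
          (∑ i, quadForm B (hA.isHermitian.eigenvectorBasis i) ^ q) ^ (1 / q) :=
        Real.inner_le_Lp_mul_Lq_of_nonneg Finset.univ hpq
          (fun i _ ↦ hA.eigenvalues_nonneg i) (fun i _ ↦ quadForm_nonneg hB _)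
    _ ≤ retr (A.rpowH p) ^ (1 / p) * retr (B.rpowH q) ^ (1 / q) := by
        rw [← retr_rpowH hA.isHermitian]
        gcongr
        · exact Real.rpow_nonneg (retr_rpowH_nonneg hA p) _
        · exact Finset.sum_nonneg fun i _ ↦ Real.rpow_nonneg (quadForm_nonneg hB _) q
        · exact one_div_nonneg.2 hpq.symm.nonneg

/-- Writing `T = K²`, the matrix `R T Rᴴ = (R K) (K Rᴴ)` may be replaced under the trace by
`(K Rᴴ) (R K)`, to which the trace inequality for the contraction `K` applies. -/
lemma retr_rpowH_conj_test_le {T : Matrix ι ι ℂ} (R : Matrix ι ι ℂ) (hT : T.PosSemidef)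
    (hT1 : (1 - T).PosSemidef) {p : ℝ} (hp : 1 ≤ p) :
    retr ((R * T * Rᴴ).rpowH p) ≤ retr ((Rᴴ * R).rpowH p * T) := by
  set K := T.rpowH (1 / 2)
  have hKherm : Kᴴ = K := isHermitian_rpowH hT.isHermitian _
  have hKK : K * K = T := by
    rw [rpowH_mul_rpowH hT (by norm_num), add_halves, rpowH_one hT.isHermitian]
  have hK : (1 - Kᴴ * K).PosSemidef := by rwa [hKherm, hKK]
  have hRR : (Rᴴ * R).PosSemidef := Matrix.posSemidef_conjTranspose_mul_self R
  have hsplit : R * T * Rᴴ = (R * K) * (K * Rᴴ) := by simp only [← hKK, Matrix.mul_assoc]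
  have hswap : (K * Rᴴ) * (R * K) = Kᴴ * (Rᴴ * R) * K := by
    simp only [hKherm, Matrix.mul_assoc]
  have hherm : ((R * K) * (K * Rᴴ)).IsHermitian :=
    hsplit ▸ (hT.mul_mul_conjTranspose_same R).isHermitian
  have hherm' : ((K * Rᴴ) * (R * K)).IsHermitian :=
    hswap ▸ (hRR.conjTranspose_mul_mul_same K).isHermitian
  calc retr ((R * T * Rᴴ).rpowH p)
      = retr ((Kᴴ * (Rᴴ * R) * K).rpowH p) := by
        rw [hsplit, retr_rpowH_mul_comm hherm hherm', hswap]
    _ ≤ retr (Kᴴ * (Rᴴ * R).rpowH p * K) := retr_rpowH_conj_le_of_contraction hRR hK hp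
    _ = retr ((Rᴴ * R).rpowH p * T) := by
        rw [hKherm, Matrix.mul_assoc, retr_mul_comm, Matrix.mul_assoc, hKK]

end TraceInequalities

section StrongConverse

variable [DecidableEq ι] {ρ σ T : Matrix ι ι ℂ}

lemma mul_rpowH_mul_rpowH_neg_of_support_le (hσ : σ.PosSemidef)
    (hsupp : ∀ v : ι → ℂ, σ.mulVec v = 0 → ρ.mulVec v = 0) (p : ℝ) :
    ρ * (σ.rpowH p * σ.rpowH (-p)) = ρ := by
  set P := σ.rpowH p * σ.rpowH (-p)
  have hσP : σ * (1 - P) = 0 := by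
    rw [Matrix.mul_sub, Matrix.mul_one, mul_rpowH_mul_rpowH_neg hσ, sub_self]
  have hρP : ρ * (1 - P) = 0 := by
    ext i j
    exact congrFun (hsupp ((1 - P).col j) (funext fun k ↦ congrFun (congrFun hσP k) j)) i
  rwa [Matrix.mul_sub, Matrix.mul_one, sub_eq_zero, eq_comm] at hρP

lemma retr_mul_eq_retr_sandwich (hρ : ρ.IsHermitian) (hσ : σ.PosSemidef)
    (hsupp : ∀ v : ι → ℂ, σ.mulVec v = 0 → ρ.mulVec v = 0) (T : Matrix ι ι ℂ) (p : ℝ) :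
    retr (ρ * T) =
      retr ((σ.rpowH p * ρ * σ.rpowH p) * (σ.rpowH (-p) * T * σ.rpowH (-p))) := by
  have hright := mul_rpowH_mul_rpowH_neg_of_support_le hσ hsupp p
  have hleft : σ.rpowH (-p) * σ.rpowH p * ρ = ρ := by
    have h := congrArg Matrix.conjTranspose hright
    rwa [Matrix.conjTranspose_mul, Matrix.conjTranspose_mul, hρ.eq,
      (isHermitian_rpowH hσ.isHermitian p).eq, (isHermitian_rpowH hσ.isHermitian (-p)).eq] at h
  calc retr (ρ * T)
      = retr (σ.rpowH (-p) * σ.rpowH p * (ρ * (σ.rpowH p * σ.rpowH (-p))) * T) := by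
        rw [hright, hleft]
    _ = retr (σ.rpowH (-p) * (σ.rpowH p * ρ * σ.rpowH p * σ.rpowH (-p) * T)) := by
        simp only [Matrix.mul_assoc]
    _ = _ := by rw [retr_mul_comm]; simp only [Matrix.mul_assoc]

/-- The quantity `Tr[(σ^{(1-α)/(2α)} ρ σ^{(1-α)/(2α)})^α]` whose logarithm, divided by `α - 1`,
is the sandwiched Rényi divergence. -/
def sandwichedQuasiDiv (α : ℝ) (ρ σ : Matrix ι ι ℂ) : ℝ :=
  retr (Matrix.rpowH
    (Matrix.rpowH σ ((1 - α) / (2 * α)) * ρ * Matrix.rpowH σ ((1 - α) / (2 * α))) α)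

lemma sandwichedRenyiDiv_eq_log_sandwichedQuasiDiv (α : ℝ) (ρ σ : Matrix ι ι ℂ) :
    sandwichedRenyiDiv α ρ σ = (α - 1)⁻¹ * Real.log (sandwichedQuasiDiv α ρ σ) := rfl

lemma posSemidef_rpowH_mul_mul_rpowH (hσ : σ.IsHermitian) (hρ : ρ.PosSemidef) (p : ℝ) :
    (σ.rpowH p * ρ * σ.rpowH p).PosSemidef := by
  have h := hρ.mul_mul_conjTranspose_same (σ.rpowH p)
  rwa [(isHermitian_rpowH hσ p).eq] at h

lemma sandwichedQuasiDiv_nonneg (hρ : ρ.PosSemidef) (hσ : σ.IsHermitian) (α : ℝ) :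
    0 ≤ sandwichedQuasiDiv α ρ σ :=
  retr_rpowH_nonneg (posSemidef_rpowH_mul_mul_rpowH hσ hρ _) α

lemma retr_rpowH_sandwich_test_le (hσ : σ.PosSemidef) (hT : T.PosSemidef)
    (hT1 : (1 - T).PosSemidef) {β : ℝ} (hβ : 1 ≤ β) :
    retr ((σ.rpowH (1 / (2 * β)) * T * σ.rpowH (1 / (2 * β))).rpowH β) ≤ retr (σ * T) := by
  have hβ0 : β ≠ 0 := by positivity
  have h := retr_rpowH_conj_test_le (σ.rpowH (1 / (2 * β))) hT hT1 hβ
  rwa [(isHermitian_rpowH hσ.isHermitian _).eq, rpowH_mul_rpowH hσ (by positivity),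
    rpowH_rpowH hσ, show (1 / (2 * β) + 1 / (2 * β)) * β = 1 by field_simp; norm_num,
    rpowH_one hσ.isHermitian] at h

lemma retr_mul_le_sandwichedQuasiDiv_rpow_mul_rpow (hρ : ρ.PosSemidef) (hσ : σ.PosSemidef)
    (hsupp : ∀ v : ι → ℂ, σ.mulVec v = 0 → ρ.mulVec v = 0) (hT : T.PosSemidef)
    (hT1 : (1 - T).PosSemidef) {α : ℝ} (hα : 1 < α) :
    retr (ρ * T) ≤ sandwichedQuasiDiv α ρ σ ^ (1 / α) * retr (σ * T) ^ ((α - 1) / α) := by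
  let γ := (1 - α) / (2 * α)
  let β := α / (α - 1)
  have hconj : α.HolderConjugate β := Real.HolderConjugate.conjExponent hα
  have hγβ : -γ = 1 / (2 * β) := by simp only [γ, β]; field_simp; ring
  have hβinv : (α - 1) / α = 1 / β := by rw [one_div_div]
  have htest : retr ((σ.rpowH (-γ) * T * σ.rpowH (-γ)).rpowH β) ≤ retr (σ * T) :=
    hγβ ▸ retr_rpowH_sandwich_test_le hσ hT hT1 hconj.symm.lt.le
  have hS := posSemidef_rpowH_mul_mul_rpowH hσ.isHermitian hρ γ
  have hY := posSemidef_rpowH_mul_mul_rpowH hσ.isHermitian hT (-γ)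
  have hQ := sandwichedQuasiDiv_nonneg hρ hσ.isHermitian α
  rw [hβinv]
  calc retr (ρ * T)
      = retr ((σ.rpowH γ * ρ * σ.rpowH γ) * (σ.rpowH (-γ) * T * σ.rpowH (-γ))) :=
        retr_mul_eq_retr_sandwich hρ.isHermitian hσ hsupp T γ
    _ ≤ sandwichedQuasiDiv α ρ σ ^ (1 / α) *
          retr ((σ.rpowH (-γ) * T * σ.rpowH (-γ)).rpowH β) ^ (1 / β) :=
        retr_mul_le_rpow_mul_rpow hS hY hconj
    _ ≤ sandwichedQuasiDiv α ρ σ ^ (1 / α) * retr (σ * T) ^ (1 / β) :=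
        mul_le_mul_of_nonneg_left (Real.rpow_le_rpow (retr_rpowH_nonneg hY β) htest
          (one_div_nonneg.2 hconj.symm.nonneg)) (Real.rpow_nonneg hQ _)

theorem one_shot_strong_converse_sandwiched_general (hρ : ρ.PosSemidef) (hρtr : retr ρ ≤ 1)
    (hσ : σ.PosSemidef) (hsupp : ∀ v : ι → ℂ, σ.mulVec v = 0 → ρ.mulVec v = 0)
    (hT : T.PosSemidef) (hT1 : (1 - T).PosSemidef) (hTρ : 0 < retr (ρ * T)) :
    (∀ α : ℝ, 1 < α →
      retr (ρ * T) ≤ Real.exp (-((α - 1) / α *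
        (-Real.log (retr (σ * T)) - sandwichedRenyiDiv α ρ σ)))) ∧
    retr (ρ * T) ≤ Real.exp (-(⨆ (α : ℝ) (_ : 1 < α),
      (α - 1) / α * (-Real.log (retr (σ * T)) - sandwichedRenyiDiv α ρ σ))) := by
  have hbound : ∀ α : ℝ, 1 < α → retr (ρ * T) ≤ Real.exp (-((α - 1) / α *
      (-Real.log (retr (σ * T)) - sandwichedRenyiDiv α ρ σ))) := fun α hα ↦ by
    rw [sandwichedRenyiDiv_eq_log_sandwichedQuasiDiv]
    exact le_exp_of_le_rpow_mul_rpow hα hTρ (sandwichedQuasiDiv_nonneg hρ hσ.isHermitian α)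
      (retr_mul_nonneg hσ hT)
      (retr_mul_le_sandwichedQuasiDiv_rpow_mul_rpow hρ hσ hsupp hT hT1 hα)
  exact ⟨hbound, le_exp_neg_iSup hTρ ((retr_mul_le_retr hρ hT1).trans hρtr) hbound⟩

end StrongConverse

end TraceAndPowers

/-- one-shot strong converse, sandwiched version.
For density operators `ρ, σ` with `supp ρ ⊆ supp σ` and any test `0 ≤ T ≤ 𝟙` with
`Tr[ρT] > 0`: for every `α > 1`,
`Tr[ρT] ≤ exp(-((α-1)/α)(-log Tr[σT] - D_α^*(ρ‖σ)))`, and consequently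
`Tr[ρT] ≤ exp(-sup_{α>1} ((α-1)/α)(-log Tr[σT] - D_α^*(ρ‖σ)))`. -/
theorem one_shot_strong_converse_sandwiched
    {ι : Type*} [Fintype ι] [DecidableEq ι]
    (ρ σ : Matrix ι ι ℂ)
    (hρ : ρ.PosSemidef) (hρtr : ρ.trace = 1)
    (hσ : σ.PosSemidef) (hσtr : σ.trace = 1)
    (hsupp : ∀ v : ι → ℂ, σ.mulVec v = 0 → ρ.mulVec v = 0)
    (T : Matrix ι ι ℂ) (hT : T.PosSemidef) (hT1 : (1 - T).PosSemidef)
    (hTρ : 0 < retr (ρ * T)) :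
    (∀ α : ℝ, 1 < α →
      retr (ρ * T) ≤ Real.exp (-((α - 1) / α *
        (-Real.log (retr (σ * T)) - sandwichedRenyiDiv α ρ σ)))) ∧
    retr (ρ * T) ≤ Real.exp (-(⨆ (α : ℝ) (_ : 1 < α),
      (α - 1) / α * (-Real.log (retr (σ * T)) - sandwichedRenyiDiv α ρ σ))) := by
  exact one_shot_strong_converse_sandwiched_general hρ (by simp [retr, hρtr]) hσ hsupp hT hT1 hTρ

end
end

section
/- Let ρ and σ be density operators on a finite-dimensional complex Hilbert space with supp(ρ) ⊆ supp(σ), and let α ∈ (0,1). Then D_α^*(ρ‖σ) = sup over positive definite operators T with 0 < T ≤ 𝟙 of { (α/(α−1)) log Tr[ρT] − log Tr[(T^{1/2} σ^{(α−1)/α} T^{1/2})^{α/(α−1)}] } (note α/(α−1) < 0, so negative powers are taken via functional calculus). -/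
open Matrix
open scoped ComplexOrder Kronecker

noncomputable section

/-!
Let `s = (1 - α) / (2 * α)`, `X = σ ^ s * ρ * σ ^ s` and `Y = σ ^ (-s) * T * σ ^ (-s)`. Then
`Tr (X * Y) = Tr (ρ * T)`, so the reverse Hölder inequality
`Tr (X ^ α) ≤ Tr (X * Y) ^ α * Tr (Y ^ (α / (α - 1))) ^ (1 - α)` bounds the objective at `T` by the
divergence. It follows from the scalar Hölder inequality, with the squared overlaps of the
eigenvectors of `X` and `Y` as doubly stochastic weights.

If `ρ` and `σ` have the same kernel, equality holds for the `T` with `Y = X ^ (α - 1)`, and since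
the objective is invariant under scaling of `T`, this `T` may be rescaled to lie below `1`. In
general `ρ + ε • σ` has the kernel of `σ`. The objective decreases when `ρ` grows, so for `ρ`
its supremum is at least the divergence of `ρ + ε • σ`, which tends to that of `ρ` as `ε → 0`.
-/

namespace SandwichedRenyi

open scoped MatrixOrder

variable {ι : Type*} [Fintype ι] {A B M : Matrix ι ι ℂ} {p q : ℝ}

section Kernel

variable {v : ι → ℂ}

lemma ne_zero_of_ker_le (hA0 : A ≠ 0) (hker : ∀ v, B *ᵥ v = 0 → A *ᵥ v = 0) : B ≠ 0 := by
  classical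
  rintro rfl
  exact hA0 (ext_of_mulVec_single fun i => by rw [hker _ (zero_mulVec _), zero_mulVec])

lemma mulVec_eq_zero_of_add_mulVec_eq_zero (hA : A.PosSemidef) (hB : B.PosSemidef)
    (hv : (A + B) *ᵥ v = 0) : A *ᵥ v = 0 ∧ B *ᵥ v = 0 := by
  have hsum : star v ⬝ᵥ A *ᵥ v + star v ⬝ᵥ B *ᵥ v = 0 := by
    rw [← dotProduct_add, ← add_mulVec, hv, dotProduct_zero]
  rw [← hA.dotProduct_mulVec_zero_iff, ← hB.dotProduct_mulVec_zero_iff]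
  exact (add_eq_zero_iff_of_nonneg (hA.dotProduct_mulVec_nonneg v)
    (hB.dotProduct_mulVec_nonneg v)).1 hsum

lemma add_smul_mulVec_eq_zero_iff (hA : A.PosSemidef) (hB : B.PosSemidef)
    (hker : ∀ v, B *ᵥ v = 0 → A *ᵥ v = 0) {ε : ℝ} (hε : 0 < ε) (v : ι → ℂ) :
    (A + ε • B) *ᵥ v = 0 ↔ B *ᵥ v = 0 := by
  refine ⟨fun hv => ?_, fun hv => by rw [add_mulVec, smul_mulVec, hv, hker v hv]; simp⟩
  have hεBv := (mulVec_eq_zero_of_add_mulVec_eq_zero hA (hB.smul hε.le) hv).2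
  rwa [smul_mulVec, smul_eq_zero_iff_right hε.ne'] at hεBv

lemma posDef_mulVec_eq_zero_iff (hA : A.PosDef) : A *ᵥ v = 0 ↔ v = 0 := by
  classical
  exact ⟨fun hv => mulVec_injective_of_isUnit hA.isUnit (hv.trans (mulVec_zero A).symm),
    fun hv => hv ▸ mulVec_zero A⟩

lemma posDef_of_mulVec_eq_zero (hA : A.PosSemidef) (hker : ∀ v, A *ᵥ v = 0 → v = 0) :
    A.PosDef := by
  classical
  rw [hA.posDef_iff_isUnit, ← mulVec_injective_iff_isUnit]
  exact (injective_iff_map_eq_zero (mulVecLin A)).2 hker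

end Kernel

section FunctionalCalculus

variable [DecidableEq ι]

lemma continuousOn_spectrum (f : ℝ → ℝ) (A : Matrix ι ι ℂ) : ContinuousOn f (spectrum ℝ A) :=
  A.finite_real_spectrum.continuousOn f

lemma spectrum_nonneg (hA : A.PosSemidef) {x : ℝ} (hx : x ∈ spectrum ℝ A) : 0 ≤ x :=
  spectrum_nonneg_of_nonneg hA.nonneg hx

lemma cfc_mul_cfc (f g : ℝ → ℝ) (A : Matrix ι ι ℂ) :
    cfc f A * cfc g A = cfc (fun x => f x * g x) A :=
  (cfc_mul f g A (continuousOn_spectrum f A) (continuousOn_spectrum g A)).symm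

lemma cfc_mulVec_eq_zero_of_imp {f g : ℝ → ℝ} (hfg : ∀ x ∈ spectrum ℝ A, f x = 0 → g x = 0)
    {v : ι → ℂ} (hv : cfc f A *ᵥ v = 0) : cfc g A *ᵥ v = 0 := by
  have hfactor : cfc g A = cfc (fun x => g x / f x) A * cfc f A := by
    rw [cfc_mul_cfc]
    exact cfc_congr fun x hx => (div_mul_cancel_of_imp (hfg x hx)).symm
  rw [hfactor, ← mulVec_mulVec, hv, mulVec_zero]

lemma rpowH_eq_cfc (hA : A.IsHermitian) (p : ℝ) : rpowH A p = cfc (fun x : ℝ => x ^ p) A := by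
  rw [hA.cfc_eq, rpowH, dif_pos hA]
  rfl

lemma rpowH_one (hA : A.IsHermitian) : rpowH A 1 = A := by
  simp only [rpowH_eq_cfc hA, Real.rpow_one]
  exact cfc_id' ℝ A hA.isSelfAdjoint

lemma one_rpowH (p : ℝ) : rpowH (1 : Matrix ι ι ℂ) p = 1 := by
  rw [rpowH_eq_cfc isHermitian_one, cfc_apply_one]
  simp

lemma isHermitian_rpowH (hA : A.IsHermitian) (p : ℝ) : (rpowH A p).IsHermitian := by
  rw [rpowH_eq_cfc hA]
  exact cfc_predicate _ A

lemma posSemidef_rpowH (hA : A.PosSemidef) (p : ℝ) : (rpowH A p).PosSemidef := by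
  rw [rpowH_eq_cfc hA.isHermitian]
  exact (cfc_nonneg fun x hx => Real.rpow_nonneg (spectrum_nonneg hA hx) p).posSemidef

lemma rpowH_mul_rpowH (hA : A.PosSemidef) (hpq : p + q ≠ 0) :
    rpowH A p * rpowH A q = rpowH A (p + q) := by
  simp only [rpowH_eq_cfc hA.isHermitian, cfc_mul_cfc]
  exact cfc_congr fun x hx => (Real.rpow_add' (spectrum_nonneg hA hx) hpq).symm

lemma rpowH_inv_two_mul_self (hA : A.PosSemidef) : rpowH A 2⁻¹ * rpowH A 2⁻¹ = A := by
  rw [rpowH_mul_rpowH hA (by norm_num), ← two_mul, mul_inv_cancel₀ two_ne_zero,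
    rpowH_one hA.isHermitian]

lemma rpowH_rpowH (hA : A.PosSemidef) (p q : ℝ) : rpowH (rpowH A p) q = rpowH A (p * q) := by
  rw [rpowH_eq_cfc (isHermitian_rpowH hA.isHermitian p), rpowH_eq_cfc hA.isHermitian,
    rpowH_eq_cfc hA.isHermitian,
    ← cfc_comp' (· ^ q) (· ^ p) A ((A.finite_real_spectrum.image _).continuousOn _)
      (continuousOn_spectrum _ A) hA.isHermitian.isSelfAdjoint]
  exact cfc_congr fun x hx => (Real.rpow_mul (spectrum_nonneg hA hx) p q).symm

lemma rpowH_smul (hA : A.PosSemidef) {c : ℝ} (hc : 0 ≤ c) (p : ℝ) :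
    rpowH (c • A) p = c ^ p • rpowH A p := by
  rw [rpowH_eq_cfc (hA.smul hc).isHermitian, rpowH_eq_cfc hA.isHermitian,
    ← cfc_comp_smul c (· ^ p) A ((A.finite_real_spectrum.image _).continuousOn _)
      hA.isHermitian.isSelfAdjoint,
    ← cfc_smul _ _ A (continuousOn_spectrum _ A)]
  exact cfc_congr fun x hx => Real.mul_rpow hc (spectrum_nonneg hA hx)

lemma rpowH_mulVec_eq_zero_iff (hA : A.PosSemidef) (hp : p ≠ 0) {v : ι → ℂ} :
    rpowH A p *ᵥ v = 0 ↔ A *ᵥ v = 0 := by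
  nth_rewrite 2 [← cfc_id' ℝ A hA.isHermitian.isSelfAdjoint]
  rw [rpowH_eq_cfc hA.isHermitian]
  exact ⟨cfc_mulVec_eq_zero_of_imp fun x hx => (Real.rpow_eq_zero (spectrum_nonneg hA hx) hp).1,
    cfc_mulVec_eq_zero_of_imp fun x hx => (Real.rpow_eq_zero (spectrum_nonneg hA hx) hp).2⟩

open scoped Matrix.Norms.L2Operator in
lemma continuousOn_rpowH (hp : 0 ≤ p) :
    ContinuousOn (fun A : Matrix ι ι ℂ => rpowH A p) {A | A.IsHermitian} :=
  (ContinuousOn.cfc_of_mem_nhdsSet (s := Set.univ) (fun x : ℝ => x ^ p) Filter.univ_mem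
    continuousOn_id (fun _ hA => hA) (Real.continuous_rpow_const hp).continuousOn).congr
    fun _ hA => rpowH_eq_cfc hA p

end FunctionalCalculus

section SupportProjection

variable [DecidableEq ι]

/-- The orthogonal projection onto the support of a Hermitian matrix, i.e. onto the orthogonal
complement of its kernel. The power `rpowH A 0` is no substitute: it is `1`, since `0 ^ 0 = 1`. -/
def supportProj (A : Matrix ι ι ℂ) : Matrix ι ι ℂ :=
  cfc (fun x : ℝ => if x = 0 then 0 else 1) A

lemma isHermitian_supportProj (A : Matrix ι ι ℂ) : (supportProj A).IsHermitian :=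
  cfc_predicate _ A

lemma supportProj_mul_self (A : Matrix ι ι ℂ) :
    supportProj A * supportProj A = supportProj A := by
  rw [supportProj, cfc_mul_cfc]
  exact cfc_congr fun x _ => by simp

lemma rpowH_mul_rpowH_neg (hA : A.PosSemidef) (hp : p ≠ 0) :
    rpowH A p * rpowH A (-p) = supportProj A := by
  rw [rpowH_eq_cfc hA.isHermitian, rpowH_eq_cfc hA.isHermitian, cfc_mul_cfc, supportProj]
  refine cfc_congr fun x hx => ?_
  rcases (spectrum_nonneg hA hx).eq_or_lt with rfl | hx
  · simp [Real.zero_rpow hp]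
  · simp [← Real.rpow_add hx, hx.ne']

lemma mul_supportProj_self (hA : A.IsHermitian) : A * supportProj A = A := by
  nth_rewrite 1 3 [← cfc_id' ℝ A hA.isSelfAdjoint]
  rw [supportProj, cfc_mul_cfc]
  exact cfc_congr fun x _ => by simp +contextual

lemma supportProj_mulVec_eq_zero (hA : A.IsHermitian) {v : ι → ℂ} (hv : A *ᵥ v = 0) :
    supportProj A *ᵥ v = 0 := by
  rw [← cfc_id' ℝ A hA.isSelfAdjoint] at hv
  exact cfc_mulVec_eq_zero_of_imp (fun x _ hx => if_pos hx) hv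

lemma mul_supportProj (hA : A.IsHermitian) (hker : ∀ v, A *ᵥ v = 0 → M *ᵥ v = 0) :
    M * supportProj A = M := by
  refine ext_of_mulVec_single fun i => ?_
  have hcompl : A *ᵥ ((1 - supportProj A) *ᵥ Pi.single i 1) = 0 := by
    rw [mulVec_mulVec, mul_sub, mul_one, mul_supportProj_self hA, sub_self, zero_mulVec]
  have hMcompl := hker _ hcompl
  rw [mulVec_mulVec, mul_sub, mul_one, sub_mulVec, sub_eq_zero] at hMcompl
  exact hMcompl.symm

lemma supportProj_mul (hA : A.IsHermitian) (hM : M.IsHermitian)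
    (hker : ∀ v, A *ᵥ v = 0 → M *ᵥ v = 0) : supportProj A * M = M := by
  simpa [hM.eq, (isHermitian_supportProj A).eq] using
    congr_arg conjTranspose (mul_supportProj hA hker)

lemma posSemidef_one_sub_supportProj (A : Matrix ι ι ℂ) : (1 - supportProj A).PosSemidef := by
  have hsq : (1 - supportProj A)ᴴ * (1 - supportProj A) = 1 - supportProj A := by
    simp [(isHermitian_supportProj A).eq, sub_mul, mul_sub, supportProj_mul_self]
  exact hsq ▸ posSemidef_conjTranspose_mul_self _

end SupportProjection

section Trace

lemma retr_add (A B : Matrix ι ι ℂ) : retr (A + B) = retr A + retr B := by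
  simp [retr]

lemma retr_smul (c : ℝ) (A : Matrix ι ι ℂ) : retr (c • A) = c * retr A := by
  simp [retr]

lemma retr_mul_comm (A B : Matrix ι ι ℂ) : retr (A * B) = retr (B * A) :=
  congr_arg Complex.re (trace_mul_comm A B)

lemma retr_nonneg (hA : A.PosSemidef) : 0 ≤ retr A :=
  (Complex.nonneg_iff.1 hA.trace_nonneg).1

lemma retr_pos (hA : A.PosSemidef) (hA0 : A ≠ 0) : 0 < retr A :=
  (Complex.pos_iff.1 (hA.trace_nonneg.lt_of_ne' (mt hA.trace_eq_zero_iff.1 hA0))).1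

lemma ne_zero_of_trace_eq_one (hA : A.trace = 1) : A ≠ 0 := by
  rintro rfl
  simp at hA

end Trace

section TraceRpow

variable [DecidableEq ι]

lemma retr_rpowH (hA : A.IsHermitian) (p : ℝ) : retr (rpowH A p) = ∑ i, hA.eigenvalues i ^ p := by
  rw [rpowH, dif_pos hA, retr, trace_mul_cycle, Unitary.coe_star_mul_self, one_mul,
    trace_diagonal, ← Complex.ofReal_sum, Complex.ofReal_re]

lemma retr_rpowH_pos (hA : A.PosSemidef) (hA0 : A ≠ 0) (hp : p ≠ 0) : 0 < retr (rpowH A p) :=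
  retr_pos (posSemidef_rpowH hA p)
    (ne_zero_of_ker_le hA0 fun _ => (rpowH_mulVec_eq_zero_iff hA hp).1)

lemma retr_rpowH_mul_conjTranspose_comm (M : Matrix ι ι ℂ) (p : ℝ) :
    retr (rpowH (M * Mᴴ) p) = retr (rpowH (Mᴴ * M) p) := by
  have hl := isHermitian_mul_conjTranspose_self M
  have hr := isHermitian_conjTranspose_mul_self M
  rw [retr_rpowH hl, retr_rpowH hr,
    (hl.eigenvalues_eq_eigenvalues_iff hr).2 (charpoly_mul_comm M Mᴴ)]

end TraceRpow

section ReverseHolder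

variable [DecidableEq ι] {α : ℝ}

/-- The squared moduli `|⟨uᵢ, vⱼ⟩|²` of the inner products of the eigenvectors `uᵢ` of `A` with the
eigenvectors `vⱼ` of `B`, the weights that reduce `Tr (A B)` to the eigenvalues of `A` and `B`. -/
def eigenOverlap (hA : A.IsHermitian) (hB : B.IsHermitian) : Matrix ι ι ℝ :=
  (star (hA.eigenvectorUnitary : Matrix ι ι ℂ) * hB.eigenvectorUnitary).map Complex.normSq

lemma map_normSq_mem_doublyStochastic {W : Matrix ι ι ℂ} (hW : W ∈ unitaryGroup ι ℂ) :
    W.map Complex.normSq ∈ doublyStochastic ℝ ι := by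
  refine mem_doublyStochastic_iff_sum.2 ⟨fun i j => Complex.normSq_nonneg _, fun i => ?_,
    fun j => ?_⟩
  · have hrow := congr_fun₂ (mem_unitaryGroup_iff.1 hW) i i
    simpa [mul_apply, Complex.mul_conj, ← Complex.ofReal_sum] using congr_arg Complex.re hrow
  · have hcol := congr_fun₂ (mem_unitaryGroup_iff'.1 hW) j j
    simpa [mul_apply, Complex.normSq_eq_conj_mul_self.symm] using congr_arg Complex.re hcol

lemma eigenOverlap_mem_doublyStochastic (hA : A.IsHermitian) (hB : B.IsHermitian) :
    eigenOverlap hA hB ∈ doublyStochastic ℝ ι :=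
  map_normSq_mem_doublyStochastic (star hA.eigenvectorUnitary * hB.eigenvectorUnitary).2

lemma retr_diagonal_mul_mul_diagonal_mul_star (x y : ι → ℝ) (W : Matrix ι ι ℂ) :
    retr (diagonal (fun i => (x i : ℂ)) * W * diagonal (fun j => (y j : ℂ)) * star W) =
      ∑ i, ∑ j, Complex.normSq (W i j) * (x i * y j) := by
  simp only [retr, trace, diag_apply, Complex.re_sum]
  refine Finset.sum_congr rfl fun i _ => ?_
  rw [Matrix.mul_apply, Complex.re_sum]
  refine Finset.sum_congr rfl fun j _ => ?_
  have hterm : (x i : ℂ) * W i j * y j * star (W i j) =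
      ((Complex.normSq (W i j) * (x i * y j) : ℝ) : ℂ) := by
    rw [Complex.ofReal_mul, ← Complex.mul_conj, Complex.ofReal_mul, Complex.star_def]
    ring
  rw [mul_diagonal, diagonal_mul, star_apply, hterm, Complex.ofReal_re]

lemma retr_mul_eq_sum_eigenOverlap (hA : A.IsHermitian) (hB : B.IsHermitian) :
    retr (A * B) =
      ∑ i, ∑ j, eigenOverlap hA hB i j * (hA.eigenvalues i * hB.eigenvalues j) := by
  refine Eq.trans ?_ (retr_diagonal_mul_mul_diagonal_mul_star hA.eigenvalues hB.eigenvalues _)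
  conv_lhs => rw [hA.spectral_theorem, hB.spectral_theorem]
  simp only [Unitary.conjStarAlgAut_apply, star_mul, star_star, mul_assoc]
  rw [retr_mul_comm]
  simp only [mul_assoc]
  rfl

lemma diagonal_eigenvalues_mul_star_eigenvectorUnitary (hA : A.IsHermitian) :
    diagonal (fun i => (hA.eigenvalues i : ℂ)) * star (hA.eigenvectorUnitary : Matrix ι ι ℂ) =
      star (hA.eigenvectorUnitary : Matrix ι ι ℂ) * A := by
  have hdiag := hA.conjStarAlgAut_star_eigenvectorUnitary
  rw [Unitary.conjStarAlgAut_star_apply] at hdiag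
  refine (congr_arg (· * _) hdiag.symm).trans ?_
  rw [mul_assoc, Unitary.mul_star_self_of_mem (SetLike.coe_mem _), mul_one]

lemma eigenOverlap_mul_eigenvalues_eq_zero (hA : A.IsHermitian) (hB : B.IsHermitian)
    (hker : ∀ v, B *ᵥ v = 0 → A *ᵥ v = 0) (i : ι) {j : ι} (hj : hB.eigenvalues j = 0) :
    eigenOverlap hA hB i j * hA.eigenvalues i = 0 := by
  have hAv : A *ᵥ hB.eigenvectorBasis j = 0 :=
    hker _ (by rw [hB.mulVec_eigenvectorBasis, hj, zero_smul])
  have hcoord : (hA.eigenvalues i : ℂ) *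
      (star (hA.eigenvectorUnitary : Matrix ι ι ℂ) * hB.eigenvectorUnitary) i j = 0 := by
    have hcol : (star (hA.eigenvectorUnitary : Matrix ι ι ℂ) *
        (A * (hB.eigenvectorUnitary : Matrix ι ι ℂ))) *ᵥ Pi.single j 1 = 0 := by
      rw [← mulVec_mulVec, ← mulVec_mulVec, hB.eigenvectorUnitary_mulVec, hAv, mulVec_zero]
    rw [← diagonal_mul (fun i => (hA.eigenvalues i : ℂ)), ← mul_assoc,
      diagonal_eigenvalues_mul_star_eigenvectorUnitary, mul_assoc]
    rw [mulVec_single_one] at hcol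
    exact congr_fun hcol i
  rcases mul_eq_zero.1 hcoord with hx | hW
  · rw [Complex.ofReal_eq_zero.1 hx, mul_zero]
  · rw [eigenOverlap, map_apply, hW, map_zero, zero_mul]

lemma sum_rpow_mul_rpow_le {κ : Type*} (s : Finset κ) {f g : κ → ℝ} (hf : ∀ i, 0 ≤ f i)
    (hg : ∀ i, 0 ≤ g i) (hα0 : 0 < α) (hα1 : α < 1) :
    ∑ i ∈ s, f i ^ α * g i ^ (1 - α) ≤ (∑ i ∈ s, f i) ^ α * (∑ i ∈ s, g i) ^ (1 - α) := by
  have hα1' : 1 - α ≠ 0 := (sub_pos.2 hα1).ne'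
  simpa [Real.rpow_rpow_inv (hf _) hα0.ne', Real.rpow_rpow_inv (hg _) hα1'] using
    Real.inner_le_Lp_mul_Lq_of_nonneg s (Real.HolderConjugate.inv_one_sub_inv hα0 hα1)
      (fun i _ => Real.rpow_nonneg (hf i) α) (fun i _ => Real.rpow_nonneg (hg i) (1 - α))

lemma mul_rpow_eq_rpow_mul_rpow {w x y : ℝ} (hw : 0 ≤ w) (hx : 0 ≤ x) (hy : 0 ≤ y)
    (hwx : y = 0 → w * x = 0) (hα0 : 0 < α) (hα1 : α < 1) :
    w * x ^ α = (w * (x * y)) ^ α * (w * y ^ (α / (α - 1))) ^ (1 - α) := by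
  rcases hy.eq_or_lt with rfl | hy
  · rcases mul_eq_zero.1 (hwx rfl) with rfl | rfl <;> simp [Real.zero_rpow hα0.ne']
  have hexp : α / (α - 1) * (1 - α) = -α := by
    rw [← neg_sub α 1, mul_neg, div_mul_cancel₀ _ (sub_neg.2 hα1).ne]
  calc w * x ^ α = w ^ (α + (1 - α)) * x ^ α * (y ^ α * y ^ (-α)) := by
        rw [← Real.rpow_add hy]
        simp
    _ = (w * (x * y)) ^ α * (w * y ^ (α / (α - 1))) ^ (1 - α) := by
        rw [Real.mul_rpow hw (by positivity), Real.mul_rpow hx hy.le,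
          Real.mul_rpow hw (by positivity), ← Real.rpow_mul hy.le, hexp,
          Real.rpow_add' hw (by simp)]
        ring

lemma sum_rpow_le_of_mem_doublyStochastic {w : Matrix ι ι ℝ} (hw : w ∈ doublyStochastic ℝ ι)
    {x y : ι → ℝ} (hx : ∀ i, 0 ≤ x i) (hy : ∀ j, 0 ≤ y j)
    (hwx : ∀ i j, y j = 0 → w i j * x i = 0) (hα0 : 0 < α) (hα1 : α < 1) :
    ∑ i, x i ^ α ≤
      (∑ i, ∑ j, w i j * (x i * y j)) ^ α * (∑ j, y j ^ (α / (α - 1))) ^ (1 - α) := by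
  have hw0 (i j : ι) : 0 ≤ w i j := nonneg_of_mem_doublyStochastic hw
  calc ∑ i, x i ^ α = ∑ i, ∑ j, w i j * x i ^ α := by
        simp only [← Finset.sum_mul, sum_row_of_mem_doublyStochastic hw, one_mul]
    _ = ∑ k : ι × ι, (w k.1 k.2 * (x k.1 * y k.2)) ^ α *
          (w k.1 k.2 * y k.2 ^ (α / (α - 1))) ^ (1 - α) := by
        rw [← Fintype.sum_prod_type']
        exact Finset.sum_congr rfl fun k _ => mul_rpow_eq_rpow_mul_rpow (hw0 _ _) (hx _) (hy _)
          (hwx _ _) hα0 hα1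
    _ ≤ (∑ k : ι × ι, w k.1 k.2 * (x k.1 * y k.2)) ^ α *
          (∑ k : ι × ι, w k.1 k.2 * y k.2 ^ (α / (α - 1))) ^ (1 - α) :=
        sum_rpow_mul_rpow_le _ (fun k => mul_nonneg (hw0 _ _) (mul_nonneg (hx _) (hy _)))
          (fun k => mul_nonneg (hw0 _ _) (Real.rpow_nonneg (hy _) _)) hα0 hα1
    _ = (∑ i, ∑ j, w i j * (x i * y j)) ^ α * (∑ j, y j ^ (α / (α - 1))) ^ (1 - α) := by
        rw [Fintype.sum_prod_type, Fintype.sum_prod_type_right]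
        simp only [← Finset.sum_mul, sum_col_of_mem_doublyStochastic hw, one_mul]

theorem retr_rpowH_le_rpow_mul_rpow (hA : A.PosSemidef) (hB : B.PosSemidef)
    (hker : ∀ v, B *ᵥ v = 0 → A *ᵥ v = 0) (hα0 : 0 < α) (hα1 : α < 1) :
    retr (rpowH A α) ≤ retr (A * B) ^ α * retr (rpowH B (α / (α - 1))) ^ (1 - α) := by
  rw [retr_rpowH hA.isHermitian, retr_rpowH hB.isHermitian,
    retr_mul_eq_sum_eigenOverlap hA.isHermitian hB.isHermitian]
  exact sum_rpow_le_of_mem_doublyStochastic (eigenOverlap_mem_doublyStochastic _ _)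
    hA.eigenvalues_nonneg hB.eigenvalues_nonneg
    (fun i j => eigenOverlap_mul_eigenvalues_eq_zero _ _ hker i) hα0 hα1

end ReverseHolder

section TraceMul

lemma retr_mul_nonneg (hA : A.PosSemidef) (hB : B.PosSemidef) : 0 ≤ retr (A * B) := by
  classical
  have hsandwich := hB.mul_mul_conjTranspose_same (rpowH A 2⁻¹)
  rw [(isHermitian_rpowH hA.isHermitian _).eq] at hsandwich
  rw [← rpowH_inv_two_mul_self hA, mul_assoc, retr_mul_comm]
  exact retr_nonneg hsandwich

lemma retr_mul_pos (hA : A.PosSemidef) (hA0 : A ≠ 0) (hB : B.PosSemidef)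
    (hker : ∀ v, B *ᵥ v = 0 → A *ᵥ v = 0) : 0 < retr (A * B) := by
  classical
  refine (retr_mul_nonneg hA hB).lt_of_ne' fun hzero => ?_
  have hle := retr_rpowH_le_rpow_mul_rpow hA hB hker (α := 2⁻¹) (by norm_num) (by norm_num)
  rw [hzero, Real.zero_rpow (by norm_num), zero_mul] at hle
  exact hle.not_gt (retr_rpowH_pos hA hA0 (by norm_num))

lemma retr_mul_posDef_pos (hA : A.PosSemidef) (hA0 : A ≠ 0) (hB : B.PosDef) :
    0 < retr (A * B) :=
  retr_mul_pos hA hA0 hB.posSemidef fun v hv => by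
    rw [(posDef_mulVec_eq_zero_iff hB).1 hv, mulVec_zero]

end TraceMul

section RpowConj

variable [DecidableEq ι] {σ : Matrix ι ι ℂ} {s : ℝ} {v : ι → ℂ}

/-- The conjugation `σ ^ s * M * σ ^ s` by a power of `σ`. For `s = (1 - α) / (2 * α)` it is the
sandwich in the definition of the sandwiched Rényi divergence. -/
def rpowConj (σ : Matrix ι ι ℂ) (s : ℝ) (M : Matrix ι ι ℂ) : Matrix ι ι ℂ :=
  rpowH σ s * M * rpowH σ s

lemma rpowConj_add (σ : Matrix ι ι ℂ) (s : ℝ) (M N : Matrix ι ι ℂ) :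
    rpowConj σ s (M + N) = rpowConj σ s M + rpowConj σ s N := by
  simp only [rpowConj, mul_add, add_mul]

lemma rpowConj_smul (σ : Matrix ι ι ℂ) (s c : ℝ) (M : Matrix ι ι ℂ) :
    rpowConj σ s (c • M) = c • rpowConj σ s M := by
  simp only [rpowConj, mul_smul_comm, smul_mul_assoc]

lemma isHermitian_rpowConj (hσ : σ.IsHermitian) (hM : M.IsHermitian) (s : ℝ) :
    (rpowConj σ s M).IsHermitian := by
  have hconj := isHermitian_conjTranspose_mul_mul (rpowH σ s) hM
  rwa [(isHermitian_rpowH hσ s).eq] at hconj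

lemma posSemidef_rpowConj (hσ : σ.IsHermitian) (hM : M.PosSemidef) (s : ℝ) :
    (rpowConj σ s M).PosSemidef := by
  have hconj := hM.mul_mul_conjTranspose_same (rpowH σ s)
  rwa [(isHermitian_rpowH hσ s).eq] at hconj

lemma rpowConj_mulVec_eq_zero_iff (hσ : σ.IsHermitian) (hM : M.PosSemidef) :
    rpowConj σ s M *ᵥ v = 0 ↔ M *ᵥ (rpowH σ s *ᵥ v) = 0 := by
  refine ⟨fun hv => ?_, fun hv => by rw [rpowConj, ← mulVec_mulVec, ← mulVec_mulVec, hv,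
    mulVec_zero]⟩
  rw [← hM.dotProduct_mulVec_zero_iff, star_mulVec, (isHermitian_rpowH hσ s).eq,
    ← dotProduct_mulVec, mulVec_mulVec, mulVec_mulVec, ← rpowConj, hv, dotProduct_zero]

lemma rpowConj_mulVec_eq_zero (hσ : σ.PosSemidef) (hs : s ≠ 0) (M : Matrix ι ι ℂ)
    (hv : σ *ᵥ v = 0) : rpowConj σ s M *ᵥ v = 0 := by
  rw [rpowConj, ← mulVec_mulVec, (rpowH_mulVec_eq_zero_iff hσ hs).2 hv, mulVec_zero]

lemma rpowConj_mulVec_eq_zero_iff_of_posDef (hσ : σ.PosSemidef) (hM : M.PosDef) (hs : s ≠ 0) :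
    rpowConj σ s M *ᵥ v = 0 ↔ σ *ᵥ v = 0 := by
  rw [rpowConj_mulVec_eq_zero_iff hσ.isHermitian hM.posSemidef, posDef_mulVec_eq_zero_iff hM,
    rpowH_mulVec_eq_zero_iff hσ hs]

lemma rpowConj_ne_zero_of_posDef (hσ : σ.PosSemidef) (hσ0 : σ ≠ 0) (hM : M.PosDef) (hs : s ≠ 0) :
    rpowConj σ s M ≠ 0 :=
  ne_zero_of_ker_le hσ0 fun _ => (rpowConj_mulVec_eq_zero_iff_of_posDef hσ hM hs).1

lemma mulVec_rpowH_mulVec_eq_zero_iff (hσ : σ.PosSemidef) (hs : s ≠ 0) :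
    σ *ᵥ (rpowH σ s *ᵥ v) = 0 ↔ σ *ᵥ v = 0 := by
  have hs2 : s + s ≠ 0 := by rwa [← two_mul, mul_ne_zero_iff_left two_ne_zero]
  rw [← rpowH_mulVec_eq_zero_iff hσ hs, mulVec_mulVec, rpowH_mul_rpowH hσ hs2,
    rpowH_mulVec_eq_zero_iff hσ hs2]

lemma rpowH_neg_mul_rpowH (hσ : σ.PosSemidef) (hs : s ≠ 0) :
    rpowH σ (-s) * rpowH σ s = supportProj σ := by
  simpa only [neg_neg] using rpowH_mul_rpowH_neg hσ (neg_ne_zero.2 hs)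

lemma rpowConj_neg_rpowConj (hσ : σ.PosSemidef) (hM : M.IsHermitian)
    (hker : ∀ v, σ *ᵥ v = 0 → M *ᵥ v = 0) (hs : s ≠ 0) :
    rpowConj σ (-s) (rpowConj σ s M) = M := by
  calc rpowConj σ (-s) (rpowConj σ s M)
      = rpowH σ (-s) * rpowH σ s * M * (rpowH σ s * rpowH σ (-s)) := by
        simp only [rpowConj, mul_assoc]
    _ = M := by
        rw [rpowH_neg_mul_rpowH hσ hs, rpowH_mul_rpowH_neg hσ hs,
          supportProj_mul hσ.isHermitian hM hker, mul_supportProj hσ.isHermitian hker]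

lemma retr_rpowConj_mul_rpowConj_neg (hσ : σ.PosSemidef) (hM : M.IsHermitian)
    (hker : ∀ v, σ *ᵥ v = 0 → M *ᵥ v = 0) (hs : s ≠ 0) (N : Matrix ι ι ℂ) :
    retr (rpowConj σ s M * rpowConj σ (-s) N) = retr (M * N) := by
  calc retr (rpowConj σ s M * rpowConj σ (-s) N)
      = retr (rpowH σ s * (M * (rpowH σ s * rpowH σ (-s)) * N * rpowH σ (-s))) := by
        simp only [rpowConj, mul_assoc]
    _ = retr (M * N * (rpowH σ (-s) * rpowH σ s)) := by
        rw [rpowH_mul_rpowH_neg hσ hs, mul_supportProj hσ.isHermitian hker, retr_mul_comm]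
        simp only [mul_assoc]
    _ = retr (M * N) := by
        rw [rpowH_neg_mul_rpowH hσ hs, retr_mul_comm, ← mul_assoc,
          supportProj_mul hσ.isHermitian hM hker]

lemma rpowConj_ne_zero (hσ : σ.PosSemidef) (hM : M.IsHermitian) (hM0 : M ≠ 0)
    (hker : ∀ v, σ *ᵥ v = 0 → M *ᵥ v = 0) (hs : s ≠ 0) : rpowConj σ s M ≠ 0 := by
  intro hzero
  apply hM0
  rw [← rpowConj_neg_rpowConj hσ hM hker hs, hzero, rpowConj, mul_zero, zero_mul]

lemma rpowConj_one_sub_supportProj (hσ : σ.PosSemidef) (hs : s ≠ 0) :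
    rpowConj σ s (1 - supportProj σ) = 0 := by
  rw [rpowConj, mul_sub, mul_one, mul_supportProj hσ.isHermitian
    fun v => (rpowH_mulVec_eq_zero_iff hσ hs).2, sub_self, zero_mul]

end RpowConj

section Objective

variable [DecidableEq ι] {ρ ρ' σ T : Matrix ι ι ℂ} {α : ℝ}

/-- The exponent `(1 - α) / (2 * α)` of `σ` in the sandwiched Rényi divergence of order `α`. -/
def sandwichExp (α : ℝ) : ℝ :=
  (1 - α) / (2 * α)

lemma sandwichExp_pos (hα0 : 0 < α) (hα1 : α < 1) : 0 < sandwichExp α :=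
  div_pos (sub_pos.2 hα1) (by positivity)

lemma neg_sandwichExp_add_neg_sandwichExp (α : ℝ) :
    -sandwichExp α + -sandwichExp α = (α - 1) / α := by
  rw [sandwichExp]
  ring

lemma sandwichedRenyiDiv_eq (α : ℝ) (ρ σ : Matrix ι ι ℂ) :
    sandwichedRenyiDiv α ρ σ =
      (α - 1)⁻¹ * Real.log (retr (rpowH (rpowConj σ (sandwichExp α) ρ) α)) :=
  rfl

/-- The functional `(α/(α-1)) log Tr[ρT] - log Tr[(T^{1/2} σ^{(α-1)/α} T^{1/2})^{α/(α-1)}]` of `T`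
whose supremum is the sandwiched Rényi divergence. -/
def variationalObjective (α : ℝ) (ρ σ T : Matrix ι ι ℂ) : ℝ :=
  α / (α - 1) * Real.log (retr (ρ * T))
    - Real.log (retr (rpowH (rpowH T 2⁻¹ * rpowH σ ((α - 1) / α) * rpowH T 2⁻¹) (α / (α - 1))))

lemma variationalObjective_eq (hσ : σ.PosSemidef) (hT : T.PosSemidef) (hα0 : α ≠ 0)
    (hα1 : α ≠ 1) :
    variationalObjective α ρ σ T = α / (α - 1) * Real.log (retr (ρ * T))
      - Real.log (retr (rpowH (rpowConj σ (-sandwichExp α) T) (α / (α - 1)))) := by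
  set M := rpowH T 2⁻¹ * rpowH σ (-sandwichExp α) with hM
  have hMH : Mᴴ = rpowH σ (-sandwichExp α) * rpowH T 2⁻¹ := by
    rw [hM, conjTranspose_mul, (isHermitian_rpowH hT.isHermitian _).eq,
      (isHermitian_rpowH hσ.isHermitian _).eq]
  have hMMH : rpowH T 2⁻¹ * rpowH σ ((α - 1) / α) * rpowH T 2⁻¹ = M * Mᴴ := by
    rw [hMH, ← neg_sandwichExp_add_neg_sandwichExp, ← rpowH_mul_rpowH hσ]
    · simp only [hM, mul_assoc]
    · rw [neg_sandwichExp_add_neg_sandwichExp]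
      exact div_ne_zero (sub_ne_zero.2 hα1) hα0
  have hMHM : rpowConj σ (-sandwichExp α) T = Mᴴ * M := by
    rw [hMH, hM, rpowConj]
    nth_rewrite 1 [← rpowH_inv_two_mul_self hT]
    simp only [mul_assoc]
  rw [variationalObjective, hMMH, retr_rpowH_mul_conjTranspose_comm, hMHM]

lemma variationalObjective_one (hρtr : ρ.trace = 1) (hσ : σ.PosSemidef) (hσtr : σ.trace = 1)
    (hα0 : α ≠ 0) (hα1 : α ≠ 1) : variationalObjective α ρ σ 1 = 0 := by
  have hexp : (α - 1) / α * (α / (α - 1)) = 1 := by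
    rw [div_mul_div_cancel₀ hα0, div_self (sub_ne_zero.2 hα1)]
  rw [variationalObjective, one_rpowH, one_mul, mul_one, mul_one, rpowH_rpowH hσ, hexp,
    rpowH_one hσ.isHermitian, retr, retr, hρtr, hσtr]
  simp

lemma div_mul_log_sub_log_le {Q a b : ℝ} (hQ : 0 < Q) (ha : 0 < a) (hb : 0 < b) (hα1 : α < 1)
    (hle : Q ≤ a ^ α * b ^ (1 - α)) :
    α / (α - 1) * Real.log a - Real.log b ≤ (α - 1)⁻¹ * Real.log Q := by
  have hlog : Real.log Q ≤ α * Real.log a + (1 - α) * Real.log b := by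
    rw [← Real.log_rpow ha, ← Real.log_rpow hb, ← Real.log_mul (by positivity) (by positivity)]
    exact Real.log_le_log hQ hle
  have hneg : α - 1 < 0 := sub_neg.2 hα1
  calc α / (α - 1) * Real.log a - Real.log b
      = (α - 1)⁻¹ * (α * Real.log a + (1 - α) * Real.log b) := by
        field_simp [hneg.ne]
        ring
    _ ≤ (α - 1)⁻¹ * Real.log Q := mul_le_mul_of_nonpos_left hlog (inv_nonpos.2 hneg.le)

theorem variationalObjective_le_sandwichedRenyiDiv (hρ : ρ.PosSemidef) (hρ0 : ρ ≠ 0)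
    (hσ : σ.PosSemidef) (hker : ∀ v, σ *ᵥ v = 0 → ρ *ᵥ v = 0) (hT : T.PosDef)
    (hα0 : 0 < α) (hα1 : α < 1) :
    variationalObjective α ρ σ T ≤ sandwichedRenyiDiv α ρ σ := by
  have hs : sandwichExp α ≠ 0 := (sandwichExp_pos hα0 hα1).ne'
  have hX := posSemidef_rpowConj hσ.isHermitian hρ (sandwichExp α)
  have hY := posSemidef_rpowConj hσ.isHermitian hT.posSemidef (-sandwichExp α)
  have hkerXY (v) (hv : rpowConj σ (-sandwichExp α) T *ᵥ v = 0) :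
      rpowConj σ (sandwichExp α) ρ *ᵥ v = 0 :=
    rpowConj_mulVec_eq_zero hσ hs ρ
      ((rpowConj_mulVec_eq_zero_iff_of_posDef hσ hT (neg_ne_zero.2 hs)).1 hv)
  have holder := retr_rpowH_le_rpow_mul_rpow hX hY hkerXY hα0 hα1
  rw [retr_rpowConj_mul_rpowConj_neg hσ hρ.isHermitian hker hs] at holder
  rw [variationalObjective_eq hσ hT.posSemidef hα0.ne' hα1.ne, sandwichedRenyiDiv_eq]
  exact div_mul_log_sub_log_le
    (retr_rpowH_pos hX (rpowConj_ne_zero hσ hρ.isHermitian hρ0 hker hs) hα0.ne')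
    (retr_mul_posDef_pos hρ hρ0 hT)
    (retr_rpowH_pos hY (rpowConj_ne_zero_of_posDef hσ (ne_zero_of_ker_le hρ0 hker) hT
      (neg_ne_zero.2 hs)) (div_ne_zero hα0.ne' (sub_neg.2 hα1).ne)) hα1 holder

lemma sandwichedRenyiDiv_nonneg (hρ : ρ.PosSemidef) (hρtr : ρ.trace = 1)
    (hσ : σ.PosSemidef) (hσtr : σ.trace = 1) (hker : ∀ v, σ *ᵥ v = 0 → ρ *ᵥ v = 0)
    (hα0 : 0 < α) (hα1 : α < 1) : 0 ≤ sandwichedRenyiDiv α ρ σ := by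
  rw [← variationalObjective_one hρtr hσ hσtr hα0.ne' hα1.ne]
  exact variationalObjective_le_sandwichedRenyiDiv hρ (ne_zero_of_trace_eq_one hρtr) hσ hker
    PosDef.one hα0 hα1

lemma variationalObjective_smul (hρ : ρ.PosSemidef) (hρ0 : ρ ≠ 0) (hσ : σ.PosSemidef)
    (hσ0 : σ ≠ 0) (hT : T.PosDef) (hα0 : 0 < α) (hα1 : α < 1)
    {c : ℝ} (hc : 0 < c) :
    variationalObjective α ρ σ (c • T) = variationalObjective α ρ σ T := by
  have hs : -sandwichExp α ≠ 0 := neg_ne_zero.2 (sandwichExp_pos hα0 hα1).ne'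
  have hY := posSemidef_rpowConj hσ.isHermitian hT.posSemidef (-sandwichExp α)
  have hY0 := rpowConj_ne_zero_of_posDef hσ hσ0 hT hs
  have hYpos := retr_rpowH_pos hY hY0 (div_ne_zero hα0.ne' (sub_neg.2 hα1).ne)
  rw [variationalObjective_eq hσ (hT.posSemidef.smul hc.le) hα0.ne' hα1.ne,
    variationalObjective_eq hσ hT.posSemidef hα0.ne' hα1.ne, rpowConj_smul, rpowH_smul hY hc.le,
    mul_smul_comm, retr_smul, retr_smul, Real.log_mul hc.ne' (retr_mul_posDef_pos hρ hρ0 hT).ne',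
    Real.log_mul (Real.rpow_pos_of_pos hc _).ne' hYpos.ne', Real.log_rpow hc]
  ring

lemma variationalObjective_add_le (hρ : ρ.PosSemidef) (hρ0 : ρ ≠ 0) (hρ' : ρ'.PosSemidef)
    (hT : T.PosDef) (hα0 : 0 ≤ α) (hα1 : α ≤ 1) :
    variationalObjective α (ρ + ρ') σ T ≤ variationalObjective α ρ σ T := by
  have hle : retr (ρ * T) ≤ retr ((ρ + ρ') * T) := by
    rw [add_mul, retr_add]
    exact le_add_of_nonneg_right (retr_mul_nonneg hρ' hT.posSemidef)
  exact sub_le_sub_right (mul_le_mul_of_nonpos_left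
    (Real.log_le_log (retr_mul_posDef_pos hρ hρ0 hT) hle)
    (div_nonpos_of_nonneg_of_nonpos hα0 (sub_nonpos.2 hα1))) _

end Objective

section Optimizer

variable [DecidableEq ι] {ρ σ : Matrix ι ι ℂ} {α : ℝ}

open scoped Matrix.Norms.L2Operator in
lemma exists_pos_smul_le_one {κ : Type*} [Finite κ] [DecidableEq κ] {T : Matrix κ κ ℂ}
    (hT : T.IsHermitian) : ∃ c : ℝ, 0 < c ∧ (1 - c • T).PosSemidef := by
  cases nonempty_fintype κ
  have hnorm : 0 < ‖T‖ + 1 := by positivity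
  refine ⟨(‖T‖ + 1)⁻¹, inv_pos.2 hnorm, ?_⟩
  have hle : T ≤ (‖T‖ + 1) • (1 : Matrix κ κ ℂ) := by
    rw [← Algebra.algebraMap_eq_smul_one]
    exact hT.isSelfAdjoint.le_algebraMap_norm_self.trans
      (algebraMap_mono _ (le_add_of_nonneg_right zero_le_one))
  have hscaled := (Matrix.le_iff.1 hle).smul (inv_pos.2 hnorm).le
  rwa [smul_sub, inv_smul_smul₀ hnorm.ne'] at hscaled

/-- The maximiser of `variationalObjective α ρ σ` when `ρ` and `σ` have the same kernel: equality in
Hölder's inequality for `X = σ^s ρ σ^s` and `Y = σ^{-s} T σ^{-s}` forces `Y` to be proportional to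
`X^{α-1}`, and the projection onto the kernel of `σ` makes `T` positive definite. -/
def optimizer (α : ℝ) (ρ σ : Matrix ι ι ℂ) : Matrix ι ι ℂ :=
  rpowConj σ (sandwichExp α) (rpowH (rpowConj σ (sandwichExp α) ρ) (α - 1)) + (1 - supportProj σ)

lemma posDef_optimizer (hρ : ρ.PosSemidef) (hσ : σ.PosSemidef)
    (hker : ∀ v, ρ *ᵥ v = 0 → σ *ᵥ v = 0) (hα0 : 0 < α) (hα1 : α < 1) :
    (optimizer α ρ σ).PosDef := by
  have hs : sandwichExp α ≠ 0 := (sandwichExp_pos hα0 hα1).ne'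
  have hX := posSemidef_rpowConj hσ.isHermitian hρ (sandwichExp α)
  have hY := posSemidef_rpowH hX (α - 1)
  have hBYB := posSemidef_rpowConj hσ.isHermitian hY (sandwichExp α)
  have hP := posSemidef_one_sub_supportProj σ
  refine posDef_of_mulVec_eq_zero (hBYB.add hP) fun v hv => ?_
  obtain ⟨hBYBv, hPv⟩ := mulVec_eq_zero_of_add_mulVec_eq_zero hBYB hP hv
  have hσv : σ *ᵥ v = 0 := by
    rw [rpowConj_mulVec_eq_zero_iff hσ.isHermitian hY,
      rpowH_mulVec_eq_zero_iff hX (sub_neg.2 hα1).ne,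
      rpowConj_mulVec_eq_zero_iff hσ.isHermitian hρ] at hBYBv
    exact (mulVec_rpowH_mulVec_eq_zero_iff hσ hs).1
      ((mulVec_rpowH_mulVec_eq_zero_iff hσ hs).1 (hker _ hBYBv))
  rwa [sub_mulVec, one_mulVec, supportProj_mulVec_eq_zero hσ.isHermitian hσv, sub_zero] at hPv

lemma rpowConj_neg_optimizer (hρ : ρ.PosSemidef) (hσ : σ.PosSemidef) (hα0 : 0 < α)
    (hα1 : α < 1) :
    rpowConj σ (-sandwichExp α) (optimizer α ρ σ) =
      rpowH (rpowConj σ (sandwichExp α) ρ) (α - 1) := by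
  have hs : sandwichExp α ≠ 0 := (sandwichExp_pos hα0 hα1).ne'
  have hX := posSemidef_rpowConj hσ.isHermitian hρ (sandwichExp α)
  rw [optimizer, rpowConj_add, rpowConj_one_sub_supportProj hσ (neg_ne_zero.2 hs), add_zero,
    rpowConj_neg_rpowConj hσ (isHermitian_rpowH hX.isHermitian _) _ hs]
  exact fun v hv => (rpowH_mulVec_eq_zero_iff hX (sub_neg.2 hα1).ne).2
    (rpowConj_mulVec_eq_zero hσ hs ρ hv)

lemma variationalObjective_optimizer (hρ : ρ.PosSemidef) (hσ : σ.PosSemidef)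
    (hker : ∀ v, ρ *ᵥ v = 0 ↔ σ *ᵥ v = 0) (hα0 : 0 < α) (hα1 : α < 1) :
    variationalObjective α ρ σ (optimizer α ρ σ) = sandwichedRenyiDiv α ρ σ := by
  have hs : sandwichExp α ≠ 0 := (sandwichExp_pos hα0 hα1).ne'
  have hα1' : α - 1 ≠ 0 := (sub_neg.2 hα1).ne
  have hT := posDef_optimizer hρ hσ (fun v => (hker v).1) hα0 hα1
  have hX := posSemidef_rpowConj hσ.isHermitian hρ (sandwichExp α)
  have htrace : retr (ρ * optimizer α ρ σ) = retr (rpowH (rpowConj σ (sandwichExp α) ρ) α) := by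
    rw [← retr_rpowConj_mul_rpowConj_neg hσ hρ.isHermitian (fun v => (hker v).2) hs,
      rpowConj_neg_optimizer hρ hσ hα0 hα1]
    nth_rewrite 1 [← rpowH_one hX.isHermitian]
    rw [rpowH_mul_rpowH hX (by simpa using hα0.ne'), add_sub_cancel]
  rw [variationalObjective_eq hσ hT.posSemidef hα0.ne' hα1.ne, htrace,
    rpowConj_neg_optimizer hρ hσ hα0 hα1, rpowH_rpowH hX, mul_div_cancel₀ _ hα1',
    sandwichedRenyiDiv_eq]
  field_simp
  ring

theorem exists_variationalObjective_eq (hρ : ρ.PosSemidef) (hρ0 : ρ ≠ 0) (hσ : σ.PosSemidef)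
    (hker : ∀ v, ρ *ᵥ v = 0 ↔ σ *ᵥ v = 0) (hα0 : 0 < α) (hα1 : α < 1) :
    ∃ T : Matrix ι ι ℂ, (T.PosDef ∧ (1 - T).PosSemidef) ∧
      variationalObjective α ρ σ T = sandwichedRenyiDiv α ρ σ := by
  have hT := posDef_optimizer hρ hσ (fun v => (hker v).1) hα0 hα1
  obtain ⟨c, hc, hle⟩ := exists_pos_smul_le_one hT.isHermitian
  refine ⟨c • optimizer α ρ σ, ⟨hT.smul hc, hle⟩, ?_⟩
  have hσ0 := ne_zero_of_ker_le hρ0 fun v => (hker v).2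
  rw [variationalObjective_smul hρ hρ0 hσ hσ0 hT hα0 hα1 hc,
    variationalObjective_optimizer hρ hσ hker hα0 hα1]

end Optimizer

section Supremum

open Filter Topology

variable [DecidableEq ι] {ρ σ : Matrix ι ι ℂ} {α : ℝ}

lemma tendsto_sandwichedRenyiDiv_add_smul (hρ : ρ.PosSemidef) (hρ0 : ρ ≠ 0) (hσ : σ.PosSemidef)
    (hker : ∀ v, σ *ᵥ v = 0 → ρ *ᵥ v = 0) (hα0 : 0 < α) (hα1 : α < 1) :
    Tendsto (fun ε : ℝ => sandwichedRenyiDiv α (ρ + ε • σ) σ) (𝓝 0)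
      (𝓝 (sandwichedRenyiDiv α ρ σ)) := by
  have hs : sandwichExp α ≠ 0 := (sandwichExp_pos hα0 hα1).ne'
  have hX := posSemidef_rpowConj hσ.isHermitian hρ (sandwichExp α)
  have hpos := retr_rpowH_pos hX (rpowConj_ne_zero hσ hρ.isHermitian hρ0 hker hs) hα0.ne'
  have hpath : Continuous fun ε : ℝ => rpowConj σ (sandwichExp α) (ρ + ε • σ) := by
    unfold rpowConj
    fun_prop
  have hherm (ε : ℝ) : (rpowConj σ (sandwichExp α) (ρ + ε • σ)).IsHermitian :=
    isHermitian_rpowConj hσ.isHermitian (hρ.isHermitian.add (hσ.isHermitian.smul (.all ε))) _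
  have hpow : Continuous fun ε : ℝ => rpowH (rpowConj σ (sandwichExp α) (ρ + ε • σ)) α :=
    (continuousOn_rpowH hα0.le).comp_continuous hpath hherm
  have hretr : Continuous fun ε : ℝ =>
      retr (rpowH (rpowConj σ (sandwichExp α) (ρ + ε • σ)) α) :=
    Complex.continuous_re.comp hpow.matrix_trace
  have hzero : ρ + (0 : ℝ) • σ = ρ := by rw [zero_smul, add_zero]
  have hlim := ((hretr.continuousAt (x := 0)).log (by simpa only [hzero] using hpos.ne')).const_mul
    (α - 1)⁻¹
  simpa only [ContinuousAt, hzero, ← sandwichedRenyiDiv_eq] using hlim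

lemma exists_sandwichedRenyiDiv_add_smul_le (hρ : ρ.PosSemidef) (hρ0 : ρ ≠ 0)
    (hσ : σ.PosSemidef) (hker : ∀ v, σ *ᵥ v = 0 → ρ *ᵥ v = 0) (hα0 : 0 < α) (hα1 : α < 1)
    {ε : ℝ} (hε : 0 < ε) :
    ∃ T : Matrix ι ι ℂ, (T.PosDef ∧ (1 - T).PosSemidef) ∧
      sandwichedRenyiDiv α (ρ + ε • σ) σ ≤ variationalObjective α ρ σ T := by
  have hεσ : (ε • σ).PosSemidef := hσ.smul hε.le
  have hsum0 : ρ + ε • σ ≠ 0 :=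
    fun hzero => hρ0 ((add_eq_zero_iff_of_nonneg hρ.nonneg hεσ.nonneg).1 hzero).1
  obtain ⟨T, hT, hTmax⟩ := exists_variationalObjective_eq (hρ.add hεσ) hsum0 hσ
    (add_smul_mulVec_eq_zero_iff hρ hσ hker hε) hα0 hα1
  exact ⟨T, hT, hTmax.symm.trans_le
    (variationalObjective_add_le hρ hρ0 hεσ hT.1 hα0.le hα1.le)⟩

-- For infeasible `x` the inner supremum is over an empty type and takes the junk value `0`.
lemma iSup_iSup_eq_of_isLUB_image {β : Type*} {f : β → ℝ} {q : β → Prop} {a : ℝ}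
    (ha : IsLUB (f '' {x | q x}) a) (ha0 : 0 ≤ a) : ⨆ (x) (_ : q x), f x = a := by
  obtain ⟨_, x₀, -, -⟩ := ha.nonempty
  have : Nonempty β := ⟨x₀⟩
  refine IsLUB.ciSup_eq ⟨?_, fun b hb => ha.2 ?_⟩
  · rintro _ ⟨x, rfl⟩
    by_cases hx : q x
    · exact (ciSup_pos hx).trans_le (ha.1 ⟨x, hx, rfl⟩)
    · have : IsEmpty (q x) := isEmpty_Prop.2 hx
      exact (Real.iSup_of_isEmpty _).trans_le ha0
  · rintro _ ⟨x, hx, rfl⟩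
    exact (ciSup_pos (f := fun _ => f x) hx).symm.trans_le (hb ⟨x, rfl⟩)

end Supremum

end SandwichedRenyi

open SandwichedRenyi

theorem sandwiched_renyi_variational_lt_one_general
    {ι : Type*} [Fintype ι] [DecidableEq ι] {ρ σ : Matrix ι ι ℂ}
    (hρ : ρ.PosSemidef) (hρ0 : ρ ≠ 0) (hσ : σ.PosSemidef)
    (hker : ∀ v, σ *ᵥ v = 0 → ρ *ᵥ v = 0) {α : ℝ} (hα0 : 0 < α) (hα1 : α < 1) :
    IsLUB (variationalObjective α ρ σ '' {T | T.PosDef ∧ (1 - T).PosSemidef})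
      (sandwichedRenyiDiv α ρ σ) := by
  refine ⟨?_, fun b hb => ?_⟩
  · rintro _ ⟨T, hT, rfl⟩
    exact variationalObjective_le_sandwichedRenyiDiv hρ hρ0 hσ hker hT.1 hα0 hα1
  have hlim := (tendsto_sandwichedRenyiDiv_add_smul hρ hρ0 hσ hker hα0 hα1).mono_left
    (nhdsWithin_le_nhds (s := Set.Ioi 0))
  refine le_of_tendsto hlim (eventually_nhdsWithin_of_forall fun ε hε => ?_)
  obtain ⟨T, hT, hle⟩ :=
    exists_sandwichedRenyiDiv_add_smul_le hρ hρ0 hσ hker hα0 hα1 (Set.mem_Ioi.1 hε)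
  exact hle.trans (hb (Set.mem_image_of_mem _ hT))

/-- variational expression for the sandwiched Rényi divergence, `α ∈ (0,1)`.
`D_α^*(ρ‖σ) = sup { (α/(α-1)) log Tr[ρT] - log Tr[(T^{1/2} σ^{(α-1)/α} T^{1/2})^{α/(α-1)}]
  : 0 < T ≤ 𝟙 }` (negative powers via functional calculus). -/
theorem sandwiched_renyi_variational_lt_one
    {ι : Type*} [Fintype ι] [DecidableEq ι]
    (ρ σ : Matrix ι ι ℂ)
    (hρ : ρ.PosSemidef) (hρtr : ρ.trace = 1)
    (hσ : σ.PosSemidef) (hσtr : σ.trace = 1)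
    (hsupp : ∀ v : ι → ℂ, σ.mulVec v = 0 → ρ.mulVec v = 0)
    (α : ℝ) (hα0 : 0 < α) (hα1 : α < 1) :
    sandwichedRenyiDiv α ρ σ =
      ⨆ (T : Matrix ι ι ℂ) (_ : T.PosDef ∧ (1 - T).PosSemidef),
        (α / (α - 1) * Real.log (retr (ρ * T))
          - Real.log (retr (Matrix.rpowH
              (Matrix.rpowH T (2⁻¹ : ℝ) * Matrix.rpowH σ ((α - 1) / α) *
                Matrix.rpowH T (2⁻¹ : ℝ)) (α / (α - 1))))) := by
  have hlub := sandwiched_renyi_variational_lt_one_general hρ (ne_zero_of_trace_eq_one hρtr) hσ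
    hsupp hα0 hα1
  exact (iSup_iSup_eq_of_isLUB_image hlub
    (sandwichedRenyiDiv_nonneg hρ hρtr hσ hσtr hsupp hα0 hα1)).symm

end
end
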